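/- Let d ≥ 1, r ≥ 0 and q be integers with q ≥ 3d, and let b_e, g_e, b_t, g_t be nonnegative integers satisfying: (i) b_e ≥ g_e − d; (ii) b_e + g_e = min(d + 2r + 1, q); (iii) b_t + g_t = d + 2r + 1; and (iv) b_t ≥ b_e · ⌈(d + 2r + 1) / (2(b_e + g_e))⌉. Then b_t ≥ r/4. -/

import Mathlib

/-!
Condition (i) says that at least `(bₑ + gₑ - d) / 2` field elements are bad. If the sending schedule
has not wrapped around, then `bₑ + gₑ = d + 2r + 1`, so more than `r` elements are bad, each with at
least one bad tuple. Otherwise `bₑ + gₑ = q ≥ 3d`, so at least a third of the elements are bad; each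
accounts for at least half of the average number of tuples per element, hence at least
`(d + 2r + 1) / 6 ≥ r / 3` tuples are bad.
-/

section

variable {K : Type*} [Field K] [LinearOrder K] [IsStrictOrderedRing K] [FloorRing K]

lemma le_mul_ceil_of_pos {b x : K} (hb : 0 ≤ b) (hx : 0 < x) : b ≤ b * ⌈x⌉ :=
  le_mul_of_one_le_right hb (mod_cast Int.one_le_ceil_iff.mpr hx)

lemma mul_le_mul_ceil_div {b c m n : K} (hc : 0 ≤ c) (hm : 0 ≤ m) (hn : 0 < n)
    (hb : c * n ≤ b) : c * m ≤ b * ⌈m / n⌉ := by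
  have hb₀ : 0 ≤ b := (mul_nonneg hc hn.le).trans hb
  calc
    c * m = c * n * (m / n) := by field_simp
    _ ≤ b * (m / n) := by gcongr
    _ ≤ b * ⌈m / n⌉ := by gcongr; exact Int.le_ceil _

theorem stmt_10_general {d r q be ge bt : K} (hd : 0 ≤ d) (hr : 0 ≤ r) (hq₀ : 0 < q)
    (hq : 3 * d ≤ q) (hbad : ge - d ≤ be) (helts : be + ge = min (d + 2 * r + 1) q)
    (htuples : be * ⌈(d + 2 * r + 1) / (2 * (be + ge))⌉ ≤ bt) :
    r / 3 ≤ bt := by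
  have hm : 0 < d + 2 * r + 1 := by positivity
  have hn : 0 < be + ge := helts ▸ lt_min hm hq₀
  refine le_trans ?_ htuples
  rcases min_choice (d + 2 * r + 1) q with hmin | hmin <;> rw [hmin] at helts
  · have hbe : r ≤ be := by linarith
    calc
      r / 3 ≤ be := by linarith
      _ ≤ be * ⌈(d + 2 * r + 1) / (2 * (be + ge))⌉ :=
        le_mul_ceil_of_pos (hr.trans hbe) (by positivity)
  · have hbe : 1 / 6 * (2 * (be + ge)) ≤ be := by linarith
    calc
      r / 3 ≤ 1 / 6 * (d + 2 * r + 1) := by linarith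
      _ ≤ be * ⌈(d + 2 * r + 1) / (2 * (be + ge))⌉ :=
        mul_le_mul_ceil_div (by norm_num) hm.le (by positivity) hbe

end

/-- Arithmetic core of the bad-tuples lemma.  Let `d ≥ 1`, `r ≥ 0`, and `q` be
integers with `q ≥ 3d`, and let `b_e, g_e, b_t, g_t` be nonnegative integers
satisfying (i) `b_e ≥ g_e − d`, (ii) `b_e + g_e = min(d + 2r + 1, q)`,
(iii) `b_t + g_t = d + 2r + 1`, and
(iv) `b_t ≥ b_e · ⌈(d + 2r + 1) / (2(b_e + g_e))⌉`.  Then `b_t ≥ r/4`. -/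
theorem stmt_10 (d r q be ge bt gt : ℕ) (hd : 1 ≤ d) (hq : 3 * d ≤ q)
    (h1 : (ge : ℤ) - d ≤ be)
    (h2 : be + ge = min (d + 2 * r + 1) q)
    (h3 : bt + gt = d + 2 * r + 1)
    (h4 : (be : ℤ) * ⌈((d : ℚ) + 2 * r + 1) / (2 * (be + ge))⌉ ≤ bt) :
    (r : ℚ) / 4 ≤ bt := by
  have third_le : (r : ℚ) / 3 ≤ bt := stmt_10_general (d := (d : ℚ)) (q := q) (be := be) (ge := ge)
    (by positivity) (by positivity) (mod_cast (by omega : 0 < q)) (mod_cast hq)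
    (mod_cast h1) (mod_cast h2) (mod_cast h4)
  exact (div_le_div_of_nonneg_left (by positivity) (by norm_num) (by norm_num)).trans third_le
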